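/- arXiv:2302.01521 — 4 statements merged into one kernel-verified Lean document; each statement's English description precedes it below -/
import Mathlib

section
/- For every natural number n ≥ 3, the alternating group Alt(n) in its natural action on n points is an IBIS group, and its base size is n − 2; in particular every irredundant base for this action has length n − 2. -/
/-- The pointwise stabiliser of a tuple (list) of points of `Ω` in `G`. -/
def listStabilizer (G : Type*) {Ω : Type*} [Group G] [MulAction G Ω] (l : List Ω) : Subgroup G :=
  ⨅ ω ∈ l, MulAction.stabilizer G ω

/-- A tuple is a base for `G` if its pointwise stabiliser is trivial. -/
def IsBaseTuple (G : Type*) {Ω : Type*} [Group G] [MulAction G Ω] (l : List Ω) : Prop :=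
  listStabilizer G l = ⊥

/-- A tuple is irredundant if, for each `i`, the pointwise stabiliser of the first `i`
entries does not fix the `(i+1)`-st entry. -/
def IsIrredundantTuple (G : Type*) {Ω : Type*} [Group G] [MulAction G Ω] (l : List Ω) : Prop :=
  ∀ i : Fin l.length, ∃ g ∈ listStabilizer G (l.take i), g • l.get i ≠ l.get i

/-- The base size of `G` on `Ω`: the minimal length of a base. -/
noncomputable def baseSize (G Ω : Type*) [Group G] [MulAction G Ω] : ℕ :=
  sInf {n | ∃ l : List Ω, l.length = n ∧ IsBaseTuple G l}

/-- `G` is an IBIS group on `Ω` if all irredundant bases have the same length. -/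
def IsIBIS (G Ω : Type*) [Group G] [MulAction G Ω] : Prop :=
  ∀ l₁ l₂ : List Ω, IsBaseTuple G l₁ → IsIrredundantTuple G l₁ →
    IsBaseTuple G l₂ → IsIrredundantTuple G l₂ → l₁.length = l₂.length

lemma mem_listStab {n : ℕ} (l : List (Fin n)) (g : alternatingGroup (Fin n)) :
    g ∈ listStabilizer (alternatingGroup (Fin n)) l ↔ ∀ x ∈ l, g.1 x = x := by
  simp only [listStabilizer, Subgroup.mem_iInf, MulAction.mem_stabilizer_iff]
  rfl

lemma base_card {n : ℕ} (l : List (Fin n)) (h : IsBaseTuple (alternatingGroup (Fin n)) l) :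
    n ≤ l.toFinset.card + 2 := by
  by_contra hc
  have h2 : 2 < (l.toFinsetᶜ).card := by
    rw [Finset.card_compl, Fintype.card_fin]; omega
  obtain ⟨a, b, c, ha, hb, hc, hab, hac, hbc⟩ := Finset.two_lt_card_iff.1 h2
  simp only [Finset.mem_compl, List.mem_toFinset] at ha hb hc
  have h3 := Equiv.Perm.isThreeCycle_swap_mul_swap_same hab hac hbc
  have hm : (⟨_, h3.mem_alternatingGroup⟩ : alternatingGroup (Fin n)) ∈
      listStabilizer (alternatingGroup (Fin n)) l := by
    rw [mem_listStab]
    intro x hx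
    have h1 : x ≠ a := by rintro rfl; exact ha hx
    have h2 : x ≠ b := by rintro rfl; exact hb hx
    have h4 : x ≠ c := by rintro rfl; exact hc hx
    simp [Equiv.swap_apply_of_ne_of_ne, h1, h2, h4]
  rw [h, Subgroup.mem_bot] at hm
  have hm' := congrArg Subtype.val hm
  have h5 := h3.card_support
  simp only [Subgroup.coe_one] at hm'
  rw [hm'] at h5
  simp at h5

lemma stab_card {n : ℕ} (l : List (Fin n)) (g : alternatingGroup (Fin n))
    (hg : g ∈ listStabilizer (alternatingGroup (Fin n)) l) (h1 : g ≠ 1) :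
    l.toFinset.card + 3 ≤ n := by
  rw [mem_listStab] at hg
  have hg1 : g.1 ≠ 1 := fun h => h1 (Subtype.ext h)
  have h2 := Equiv.Perm.two_le_card_support_of_ne_one hg1
  have h3 : g.1.support.card ≠ 2 := by
    intro h
    have hs := (Equiv.Perm.card_support_eq_two.1 h).sign_eq
    rw [Equiv.Perm.mem_alternatingGroup.1 g.2] at hs
    exact absurd hs (by decide)
  have hd : Disjoint l.toFinset g.1.support := by
    rw [Finset.disjoint_left]
    intro x hx
    simpa using hg x (List.mem_toFinset.1 hx)
  have := Finset.card_le_univ (l.toFinset ∪ g.1.support)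
  rw [Finset.card_union_of_disjoint hd, Fintype.card_fin] at this
  omega

lemma irr_nodup {n : ℕ} (l : List (Fin n))
    (h : IsIrredundantTuple (alternatingGroup (Fin n)) l) : l.Nodup := by
  rw [List.Nodup, List.pairwise_iff_getElem]
  intro i j hi hj hij he
  obtain ⟨g, hg, hne⟩ := h ⟨j, hj⟩
  rw [mem_listStab] at hg
  apply hne
  refine hg _ ?_
  rw [List.mem_take_iff_getElem]
  exact ⟨i, by simp; omega, he⟩

lemma irr_len {n : ℕ} (hn : 3 ≤ n) (l : List (Fin n))
    (hb : IsBaseTuple (alternatingGroup (Fin n)) l)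
    (h : IsIrredundantTuple (alternatingGroup (Fin n)) l) : l.length = n - 2 := by
  have h1 := base_card l hb
  have h2 := List.toFinset_card_le l
  by_contra hc
  have hlt : n - 2 < l.length := by omega
  obtain ⟨g, hg, hne⟩ := h ⟨n - 2, hlt⟩
  have h3 := stab_card _ g hg (by rintro rfl; simp at hne)
  rw [List.toFinset_card_of_nodup ((irr_nodup l h).sublist (List.take_sublist _ _))] at h3
  simp at h3
  omega

/-- For `n ≥ 3`, the alternating group on `n` points in its natural action is an IBIS group
of base size `n - 2`; in particular every irredundant base has length `n - 2`. -/
theorem alternatingGroup_isIBIS (n : ℕ) (hn : 3 ≤ n) :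
    IsIBIS (alternatingGroup (Fin n)) (Fin n) ∧
    baseSize (alternatingGroup (Fin n)) (Fin n) = n - 2 ∧
    ∀ l : List (Fin n), IsBaseTuple (alternatingGroup (Fin n)) l →
      IsIrredundantTuple (alternatingGroup (Fin n)) l → l.length = n - 2 := by
  refine ⟨fun l₁ l₂ a b c d => (irr_len hn l₁ a b).trans (irr_len hn l₂ c d).symm, ?_,
    fun l a b => irr_len hn l a b⟩
  have hmem : n - 2 ∈ {m | ∃ l : List (Fin n), l.length = m ∧
      IsBaseTuple (alternatingGroup (Fin n)) l} := by
    refine ⟨(List.finRange n).take (n - 2), by simp, ?_⟩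
    rw [IsBaseTuple, Subgroup.eq_bot_iff_forall]
    intro g hg
    by_contra h1
    have h3 := stab_card _ g hg h1
    rw [List.toFinset_card_of_nodup
      ((List.nodup_finRange n).sublist (List.take_sublist _ _))] at h3
    simp at h3
    omega
  apply le_antisymm
  · exact Nat.sInf_le hmem
  · refine le_csInf ⟨_, hmem⟩ ?_
    rintro m ⟨l, rfl, hl⟩
    have h1 := base_card l hl
    have h2 := List.toFinset_card_le l
    omega
end

section
/- Let G be a finite group acting faithfully on a set Ω. Then G is an IBIS group on Ω if and only if every reordering of every irredundant base of G is again an irredundant base (equivalently, is irredundant). -/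
open MulAction in
/-- Recursive irredundancy relative to a subgroup. -/
def Irr {G Ω : Type*} [Group G] [MulAction G Ω] : Subgroup G → List Ω → Prop
  | _, [] => True
  | H, x :: l => ¬ H ≤ stabilizer G x ∧ Irr (H ⊓ stabilizer G x) l

section
variable {G Ω : Type*} [Group G] [MulAction G Ω]
open MulAction

lemma ls_nil : listStabilizer G ([] : List Ω) = ⊤ := by simp [listStabilizer]

lemma ls_cons (x : Ω) (l : List Ω) :
    listStabilizer G (x :: l) = stabilizer G x ⊓ listStabilizer G l := by
  simp [listStabilizer, iInf_or, iInf_inf_eq]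

lemma ls_append (a b : List Ω) :
    listStabilizer G (a ++ b) = listStabilizer G a ⊓ listStabilizer G b := by
  simp [listStabilizer, iInf_or, iInf_inf_eq]

lemma ls_perm {a b : List Ω} (h : a.Perm b) : listStabilizer G a = listStabilizer G b := by
  simp [listStabilizer, h.mem_iff]

lemma Irr_append (H : Subgroup G) (a b : List Ω) :
    Irr H (a ++ b) ↔ Irr H a ∧ Irr (H ⊓ listStabilizer G a) b := by
  induction a generalizing H with
  | nil => simp [Irr, ls_nil]
  | cons x a ih => simp [Irr, ih, ls_cons, inf_assoc, and_assoc]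

lemma Irr_iff_aux (H : Subgroup G) (l : List Ω) :
    (∀ i : Fin l.length, ∃ g ∈ H ⊓ listStabilizer G (l.take i), g • l.get i ≠ l.get i)
      ↔ Irr H l := by
  induction l generalizing H with
  | nil => simp [Irr]
  | cons x l ih =>
    rw [Irr, ← ih]
    constructor
    · intro h
      refine ⟨?_, fun i => ?_⟩
      · obtain ⟨g, hg, hx⟩ := h ⟨0, by simp⟩
        intro hle
        exact hx (hle hg.1)
      · have := h i.succ
        simpa [ls_cons, inf_assoc] using this
    · rintro ⟨h0, h⟩ i
      refine Fin.cases ?_ (fun i => ?_) i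
      · obtain ⟨g, hg, hx⟩ := SetLike.not_le_iff_exists.1 h0
        exact ⟨g, by simpa [ls_nil] using hg, hx⟩
      · have := h i
        simpa [ls_cons, inf_assoc] using this

lemma irr_iff (l : List Ω) : IsIrredundantTuple G l ↔ Irr (⊤ : Subgroup G) l := by
  rw [← Irr_iff_aux]; simp [IsIrredundantTuple]

lemma exists_sublist (H : Subgroup G) (l : List Ω) : ∃ m : List Ω, m.Sublist l ∧ Irr H m ∧
    H ⊓ listStabilizer G m = H ⊓ listStabilizer G l := by
  induction l generalizing H with
  | nil => exact ⟨[], List.Sublist.refl _, trivial, rfl⟩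
  | cons x l ih =>
    by_cases hx : H ≤ stabilizer G x
    · obtain ⟨m, h1, h2, h3⟩ := ih H
      refine ⟨m, h1.cons _, h2, ?_⟩
      rw [ls_cons, ← inf_assoc, inf_eq_left.2 hx, h3]
    · obtain ⟨m, h1, h2, h3⟩ := ih (H ⊓ stabilizer G x)
      refine ⟨x :: m, h1.cons_cons _, ⟨hx, h2⟩, ?_⟩
      rw [ls_cons, ls_cons, ← inf_assoc, h3, inf_assoc]

lemma exists_extend [Finite G] [FaithfulSMul G Ω] (n : ℕ) (l : List Ω)
    (hn : Nat.card (listStabilizer G l) ≤ n) (h : Irr (⊤ : Subgroup G) l) :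
    ∃ m, Irr (⊤ : Subgroup G) (l ++ m) ∧ listStabilizer G (l ++ m) = ⊥ := by
  induction n generalizing l with
  | zero => have := Nat.card_pos (α := listStabilizer G l); omega
  | succ n ih =>
    by_cases hb : listStabilizer G l = ⊥
    · exact ⟨[], by simpa using h, by simpa using hb⟩
    · obtain ⟨g, hg, h1⟩ := (Subgroup.bot_or_exists_ne_one (listStabilizer G l)).resolve_left hb
      have : ∃ x : Ω, (g : G) • x ≠ x := by
        by_contra! hc
        exact h1 (FaithfulSMul.eq_of_smul_eq_smul (α := Ω) fun x => by simp [hc x])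
      obtain ⟨x, hx⟩ := this
      have hnle : ¬ listStabilizer G l ≤ stabilizer G x := fun hle => hx (hle hg)
      have hlt : listStabilizer G (l ++ [x]) < listStabilizer G l := by
        rw [ls_append, ls_cons, ls_nil, inf_top_eq]
        exact inf_lt_left.2 hnle
      have hc : Nat.card (listStabilizer G (l ++ [x])) < Nat.card (listStabilizer G l) :=
        Set.Finite.card_lt_card (Set.toFinite _) hlt
      obtain ⟨m, hm⟩ := ih (l ++ [x]) (by omega)
        ((Irr_append _ _ _).2 ⟨h, by simpa [Irr] using hnle⟩)
      exact ⟨x :: m, by simpa using hm⟩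

lemma exch (P : ∀ l l' : List Ω, Irr (⊤ : Subgroup G) l → l.Perm l' → Irr (⊤ : Subgroup G) l')
    (x : Ω) (b p : List Ω) (hb : Irr (⊤ : Subgroup G) (p ++ b))
    (hx : Irr (⊤ : Subgroup G) (p ++ [x])) :
    ∃ b', Irr (⊤ : Subgroup G) (p ++ x :: b') ∧ b.length ≤ b'.length + 1 := by
  induction b generalizing p with
  | nil => exact ⟨[], hx, by simp⟩
  | cons y b ih =>
    by_cases hyx : Irr (⊤ : Subgroup G) ((p ++ [y]) ++ [x])
    · obtain ⟨b', h1, h2⟩ := ih (p ++ [y]) (by simpa using hb) hyx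
      refine ⟨y :: b', P _ _ h1 ?_, by simpa using h2⟩
      simpa using (List.Perm.swap x y b').append_left p
    · have hxy : ¬ Irr (⊤ : Subgroup G) (p ++ [x, y]) := fun h => hyx (P _ _ h (by
        exact (by simpa using (List.Perm.swap y x []).append_left p)))
      refine ⟨b, ?_, by simp⟩
      simp only [Irr_append, Irr, List.append_assoc, List.cons_append, List.nil_append,
        top_inf_eq, and_true] at *
      obtain ⟨h1, h2, h3⟩ := hb
      have e1 : listStabilizer G p ⊓ stabilizer G y ≤ stabilizer G x := by
        by_contra hc; exact hyx ⟨h1, h2, hc⟩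
      have e2 : listStabilizer G p ⊓ stabilizer G x ≤ stabilizer G y := by
        by_contra hc; exact hxy ⟨h1, hx.2, hc⟩
      have e : listStabilizer G p ⊓ stabilizer G x = listStabilizer G p ⊓ stabilizer G y :=
        le_antisymm (le_inf inf_le_left e2) (le_inf inf_le_left e1)
      exact ⟨h1, hx.2, e ▸ h3⟩

lemma steinitz (P : ∀ l l' : List Ω, Irr (⊤ : Subgroup G) l → l.Perm l' → Irr (⊤ : Subgroup G) l')
    (a p b : List Ω) (ha : Irr (⊤ : Subgroup G) (p ++ a)) (hbase : listStabilizer G (p ++ a) = ⊥)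
    (hb : Irr (⊤ : Subgroup G) (p ++ b)) : b.length ≤ a.length := by
  induction a generalizing p b with
  | nil =>
    cases b with
    | nil => simp
    | cons y b =>
      rw [Irr_append] at hb
      rw [List.append_nil] at hbase
      rw [hbase] at hb
      exact absurd (by simp) hb.2.1
  | cons x a ih =>
    obtain ⟨b', h1, h2⟩ := exch P x b p hb (by
      have : p ++ x :: a = (p ++ [x]) ++ a := by simp
      rw [this, Irr_append] at ha
      exact ha.1)
    have := ih (p ++ [x]) b' (by simpa using ha) (by simpa using hbase) (by simpa using h1)
    simp only [List.length_cons]; omega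

end

/-- Cameron–Fon-Der-Flaass: `G` is IBIS iff every reordering of every irredundant base is
again an irredundant base. -/
theorem isIBIS_iff_perm_of_irredundant_base {G Ω : Type*} [Group G] [Finite G]
    [MulAction G Ω] [FaithfulSMul G Ω] :
    IsIBIS G Ω ↔ ∀ l l' : List Ω, IsBaseTuple G l → IsIrredundantTuple G l → l.Perm l' →
      IsBaseTuple G l' ∧ IsIrredundantTuple G l' := by
  constructor
  · intro h l l' hb hi hp
    have hb' : listStabilizer G l' = ⊥ := (ls_perm hp).symm.trans hb
    refine ⟨hb', ?_⟩
    obtain ⟨m, h1, h2, h3⟩ := exists_sublist (⊤ : Subgroup G) l'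
    have hmb : IsBaseTuple G m := by
      rw [top_inf_eq, top_inf_eq] at h3
      exact h3.trans hb'
    have hlen := h l m hb hi hmb ((irr_iff m).2 h2)
    have : m = l' := h1.eq_of_length (hlen.symm.trans hp.length_eq)
    exact this ▸ (irr_iff m).2 h2
  · intro h
    have P : ∀ l l' : List Ω, Irr (⊤ : Subgroup G) l → l.Perm l' →
        Irr (⊤ : Subgroup G) l' := by
      intro l l' hl hp
      obtain ⟨m, h1, h2⟩ := exists_extend _ l le_rfl hl
      have := (h (l ++ m) (l' ++ m) h2 ((irr_iff _).2 h1) (hp.append_right m)).2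
      exact ((Irr_append _ _ _).1 ((irr_iff _).1 this)).1
    intro l₁ l₂ b1 i1 b2 i2
    rw [irr_iff] at i1 i2
    exact le_antisymm (steinitz P l₂ [] l₁ i2 b2 i1) (steinitz P l₁ [] l₂ i1 b1 i2)
end

section
/- Let G be a finite group acting faithfully and primitively on a finite set Ω with base size b(G) = 2, and suppose the socle of G — the subgroup generated by all minimal normal subgroups of G — is non-abelian. Then G is not an IBIS group on Ω. -/
/-- A normal subgroup is minimal normal if it is nontrivial and contains no normal subgroup
of `G` other than itself and the trivial subgroup. -/
def IsMinimalNormal {G : Type*} [Group G] (N : Subgroup G) : Prop :=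
  N.Normal ∧ N ≠ ⊥ ∧ ∀ M : Subgroup G, M.Normal → M ≤ N → M = ⊥ ∨ M = N

/-- The socle of a group: the subgroup generated by all its minimal normal subgroups. -/
def socle (G : Type*) [Group G] : Subgroup G :=
  ⨆ N ∈ {N : Subgroup G | IsMinimalNormal N}, N

/-- An action is primitive if it is transitive and every block is trivial. -/
def IsPrimitiveAction (G Ω : Type*) [Group G] [MulAction G Ω] : Prop :=
  MulAction.IsPretransitive G Ω ∧
    ∀ B : Set Ω, MulAction.IsBlock G B → B.Subsingleton ∨ B = Set.univ


section FrobeniusReps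
open Representation
universe u v

theorem rep_ind {G : Type*} [Group G] [Finite G]
    (P : ∀ (V : Type v) [AddCommGroup V] [Module ℂ V], Representation ℂ G V → Prop)
    (h0 : ∀ (V : Type v) [AddCommGroup V] [Module ℂ V] (ρ : Representation ℂ G V),
      Subsingleton V → P V ρ)
    (hirr : ∀ (V : Type v) [AddCommGroup V] [Module ℂ V] (ρ : Representation ℂ G V)
      [FiniteDimensional ℂ V], IsIrreducible ρ → P V ρ)
    (hadd : ∀ (V : Type v) [AddCommGroup V] [Module ℂ V] (ρ : Representation ℂ G V)
      [FiniteDimensional ℂ V] (A B : Subrepresentation ρ),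
      IsCompl A.toSubmodule B.toSubmodule →
      P A.toSubmodule A.toRepresentation → P B.toSubmodule B.toRepresentation → P V ρ)
    (V : Type v) [AddCommGroup V] [Module ℂ V] (ρ : Representation ℂ G V)
    [FiniteDimensional ℂ V] : P V ρ := by
  induction hn : Module.finrank ℂ V using Nat.strong_induction_on generalizing V with
  | _ n ih =>
  by_cases hs : Subsingleton V
  · exact h0 V ρ hs
  by_cases hi : IsIrreducible ρ
  · exact hirr V ρ hi
  have hnt : Nontrivial V := not_subsingleton_iff_nontrivial.mp hs
  have : ∃ A : Subrepresentation ρ, A ≠ ⊥ ∧ A ≠ ⊤ := by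
    by_contra! hcon
    apply hi
    have : Nontrivial (Subrepresentation ρ) := by
      refine ⟨⟨⊥, ⊤, fun h => ?_⟩⟩
      have := congrArg Subrepresentation.toSubmodule h
      exact bot_ne_top this
    refine ⟨fun A => ?_⟩
    by_cases hA : A = ⊥
    · exact Or.inl hA
    · exact Or.inr (hcon A hA)
  obtain ⟨A, hA0, hA1⟩ := this
  obtain ⟨B, hAB⟩ := exists_isCompl A
  have hc : IsCompl A.toSubmodule B.toSubmodule := by
    constructor
    · rw [disjoint_iff]
      exact congrArg Subrepresentation.toSubmodule hAB.inf_eq_bot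
    · rw [codisjoint_iff]
      exact congrArg Subrepresentation.toSubmodule hAB.sup_eq_top
  have hsum := Submodule.finrank_add_eq_of_isCompl hc
  have hA0' : A.toSubmodule ≠ ⊥ := fun h => hA0 (Subrepresentation.toSubmodule_injective h)
  have hA1' : A.toSubmodule ≠ ⊤ := fun h => hA1 (Subrepresentation.toSubmodule_injective h)
  have hlt := Submodule.finrank_lt hA1'
  have hpos : 0 < Module.finrank ℂ A.toSubmodule := by
    rw [Nat.pos_iff_ne_zero]
    intro h; exact hA0' (Submodule.finrank_eq_zero.mp h)
  refine hadd V ρ A B hc (ih _ (by omega) _ _ rfl) (ih _ (by omega) _ _ rfl)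

theorem char_add {G V : Type*} [Group G] [AddCommGroup V] [Module ℂ V] (ρ : Representation ℂ G V)
    [FiniteDimensional ℂ V] (A B : Subrepresentation ρ)
    (h : IsCompl A.toSubmodule B.toSubmodule) (g : G) :
    ρ.character g = A.toRepresentation.character g + B.toRepresentation.character g := by
  unfold character
  rw [← LinearMap.trace_prodMap', ← LinearMap.trace_conj' _ (Submodule.prodEquivOfIsCompl _ _ h)]
  congr 1
  ext v
  obtain ⟨w, rfl⟩ := (Submodule.prodEquivOfIsCompl _ _ h).surjective v
  rw [LinearEquiv.conj_apply]
  simp [Subrepresentation.toRepresentation]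

/-- regular rep -/
def regRep (G : Type*) [Group G] : Representation ℂ G (G → ℂ) where
  toFun g := LinearMap.funLeft ℂ ℂ (fun x => g⁻¹ * x)
  map_one' := by ext; simp [LinearMap.funLeft]
  map_mul' a b := by ext; simp [LinearMap.funLeft, mul_assoc]

theorem regRep_apply {G : Type*} [Group G] (g x : G) (f : G → ℂ) :
   regRep G g f x = f (g⁻¹ * x) := rfl

open Classical in
theorem regRep_char {G : Type*} [Group G] [Fintype G] (g : G) :
    (regRep G).character g = if g = 1 then (Fintype.card G : ℂ) else 0 := by
  unfold character
  rw [LinearMap.trace_eq_matrix_trace ℂ (Pi.basisFun ℂ G)]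
  simp only [Matrix.trace, Matrix.diag, LinearMap.toMatrix_apply, Pi.basisFun_repr,
    Pi.basisFun_apply, regRep_apply, Pi.single_apply]
  by_cases h : g = 1 <;> simp [h]

theorem sum_char_zero {G : Type*} [Group G] [Fintype G] (f : G → ℂ)
    (hf : ∀ (V : Type v) [AddCommGroup V] [Module ℂ V] (ρ : Representation ℂ G V)
      [FiniteDimensional ℂ V], IsIrreducible ρ → ∑ g, ρ.character g * f g = 0)
    (V : Type v) [AddCommGroup V] [Module ℂ V] (ρ : Representation ℂ G V)
      [FiniteDimensional ℂ V] : ∑ g, ρ.character g * f g = 0 := by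
  refine rep_ind (fun V _ _ ρ => ∑ g, ρ.character g * f g = 0) ?_ ?_ ?_ V ρ
  · intro V _ _ ρ h
    apply Finset.sum_eq_zero
    intro g _
    have : ρ g = 0 := Subsingleton.elim _ _
    simp [character, this]
  · intro V _ _ ρ _ h
    exact hf V ρ h
  · intro V _ _ ρ _ A B h hA hB
    simp_rw [char_add ρ A B h, add_mul, Finset.sum_add_distrib]
    rw [hA, hB, add_zero]

open scoped ComplexOrder Matrix in
theorem char_inv_conj {G V : Type*} [Group G] [Finite G] [AddCommGroup V] [Module ℂ V]
    (ρ : Representation ℂ G V) [FiniteDimensional ℂ V] (g : G) :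
    ρ.character g⁻¹ = starRingEnd ℂ (ρ.character g) := by
  classical
  have := Fintype.ofFinite G
  let b := Module.finBasis ℂ V
  let M : G → Matrix _ _ ℂ := fun g => LinearMap.toMatrix b b (ρ g)
  have hM1 : M 1 = 1 := by simp [M]
  have hMm : ∀ x y, M (x * y) = M x * M y := by
    intro x y; simp [M, LinearMap.toMatrix_mul]
  have htr : ∀ x, ρ.character x = (M x).trace := fun x => LinearMap.trace_eq_matrix_trace ℂ b _
  let A := ∑ x, (M x)ᴴ * M x
  have hA : A.PosDef := by
    have h1 : A = (M 1)ᴴ * M 1 + ∑ x ∈ Finset.univ.erase 1, (M x)ᴴ * M x := by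
      exact (Finset.add_sum_erase _ (fun x => (M x)ᴴ * M x) (Finset.mem_univ 1)).symm
    rw [h1, hM1]
    apply Matrix.PosDef.add_posSemidef
    · simpa using Matrix.PosDef.one
    · exact Matrix.posSemidef_sum _ (fun x _ => Matrix.posSemidef_conjTranspose_mul_self _)
  have hinv : (M g)ᴴ * A * M g = A := by
    simp only [A, Finset.mul_sum, Finset.sum_mul]
    rw [← Equiv.sum_comp (Equiv.mulRight g) (fun x => (M x)ᴴ * M x)]
    apply Finset.sum_congr rfl
    intro x _
    simp [hMm, Matrix.mul_assoc]
  have hu : IsUnit A := hA.isUnit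
  have hdet : IsUnit A.det := (Matrix.isUnit_iff_isUnit_det _).mp hu
  have h2 : (M g)ᴴ * A = A * M g⁻¹ := by
    have : (M g)ᴴ * A * M g * M g⁻¹ = A * M g⁻¹ := by rw [hinv]
    rw [Matrix.mul_assoc _ (M g), ← hMm, mul_inv_cancel, hM1, Matrix.mul_one] at this
    exact this
  have h3 : M g⁻¹ = A⁻¹ * ((M g)ᴴ * A) := by
    rw [h2, Matrix.nonsing_inv_mul_cancel_left _ _ hdet]
  rw [htr, htr, h3, Matrix.trace_mul_comm, Matrix.mul_assoc, Matrix.mul_nonsing_inv _ hdet,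
    Matrix.mul_one, Matrix.trace_conjTranspose]
  rfl

end FrobeniusReps

section FrobeniusThm
open Representation Classical
universe u v

/-- Frobenius kernel predicate -/
def InK {G : Type*} [Group G] (H : Subgroup G) (g : G) : Prop := ∀ x : G, x⁻¹ * g * x ∈ H → g = 1

/-- malnormal -/
def Malnormal {G : Type*} [Group G] (H : Subgroup G) : Prop :=
  ∀ g x : G, x ∈ H → g * x * g⁻¹ ∈ H → x ≠ 1 → g ∈ H

set_option linter.unusedSectionVars false
variable {G : Type u} [Group G] [Fintype G] {H : Subgroup G}

theorem frob_count (hm : Malnormal H) (f : G → ℂ) (hf : ∀ g x, f (x * g * x⁻¹) = f g) :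
    (Fintype.card H : ℂ) * ∑ g with ¬ InK H g, f g
      = Fintype.card G * ∑ g with (g ∈ H ∧ g ≠ 1), f g := by
  have key : ∑ x : G, ∑ g : G, (if x⁻¹ * g * x ∈ H ∧ g ≠ 1 then f g else 0)
      = Fintype.card G * ∑ g with (g ∈ H ∧ g ≠ 1), f g := by
    have : ∀ x : G, ∑ g : G, (if x⁻¹ * g * x ∈ H ∧ g ≠ 1 then f g else 0)
        = ∑ g with (g ∈ H ∧ g ≠ 1), f g := by
      intro x
      rw [Finset.sum_filter, ← Equiv.sum_comp (MulAut.conj x).toEquiv]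
      apply Finset.sum_congr rfl
      intro g _
      have h1 : x⁻¹ * (x * g * x⁻¹) * x = g := by group
      simp only [MulEquiv.toEquiv_eq_coe, MulEquiv.coe_toEquiv, MulAut.conj_apply, hf, h1, ne_eq,
        conj_eq_one_iff]
    simp [this]
  rw [← key, Finset.sum_comm, Finset.mul_sum, Finset.sum_filter]
  apply Finset.sum_congr rfl
  intro g _
  by_cases hg : InK H g
  · simp only [hg, not_true_eq_false, if_false]
    symm
    apply Finset.sum_eq_zero
    intro x _
    rw [if_neg]
    rintro ⟨h1, h2⟩
    exact h2 (hg x h1)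
  · simp only [hg, not_false_eq_true, if_true]
    unfold InK at hg
    push Not at hg
    obtain ⟨x0, hx0, hg1⟩ := hg
    rw [← Finset.sum_filter, Finset.sum_const, nsmul_eq_mul]
    congr 2
    rw [← Finset.card_univ]
    refine Finset.card_bij' (fun h _ => x0 * (h : G)) (fun x hx => ⟨x0⁻¹ * x, ?_⟩) ?_ ?_ ?_ ?_
    · simp only [Finset.mem_filter, Finset.mem_univ, true_and] at hx
      have h2 := hm (x⁻¹ * x0) (x0⁻¹ * g * x0) hx0 (by convert hx.1 using 1; group) (by
        intro h; apply hg1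
        have := congrArg (fun t => x0 * t * x0⁻¹) h
        simpa [mul_assoc] using this)
      have := H.inv_mem h2
      simpa using this
    · intro h _
      simp only [Finset.mem_filter, Finset.mem_univ, true_and]
      refine ⟨?_, hg1⟩
      have : (x0 * (h:G))⁻¹ * g * (x0 * h) = (h:G)⁻¹ * (x0⁻¹ * g * x0) * h := by group
      rw [this]
      exact H.mul_mem (H.mul_mem (H.inv_mem h.2) hx0) h.2
    · intro x hx; exact Finset.mem_univ _
    · intro h _; simp
    · intro x _; simp

theorem frob_sum (hm : Malnormal H) (f : G → ℂ) (hf : ∀ g x, f (x * g * x⁻¹) = f g) :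
    ∑ g, f g = ∑ g with InK H g, f g + H.index * (∑ h : H, f h - f 1) := by
  have h1 := frob_count hm f hf
  have h2 : ∑ g with (g ∈ H ∧ g ≠ 1), f g = ∑ h : H, f h - f 1 := by
    have h3 : ∑ h : H, f h = ∑ g with g ∈ H, f g := by
      rw [Finset.sum_subtype (p := fun g => g ∈ H)]
      simp
    have h4 : (Finset.univ.filter fun g => g ∈ H ∧ g ≠ 1)
       = (Finset.univ.filter fun g => g ∈ H).erase 1 := by
      ext; simp [and_comm]
    rw [h3, h4, ← Finset.add_sum_erase (Finset.univ.filter fun g => g ∈ H) f (a := 1)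
      (by simp [H.one_mem])]
    ring
  have h5 : (Fintype.card G : ℂ) = H.index * Fintype.card H := by
    rw [← Nat.card_eq_fintype_card, ← Nat.card_eq_fintype_card, ← H.index_mul_card]
    push_cast; rfl
  have h6 : (Fintype.card H : ℂ) ≠ 0 := by
    exact_mod_cast Fintype.card_ne_zero
  rw [h5, h2] at h1
  have h7 : ∑ g with ¬ InK H g, f g = H.index * (∑ h : H, f h - f 1) := by
    apply mul_left_cancel₀ h6
    rw [h1]; ring
  rw [← h7, Finset.sum_filter_add_sum_filter_not]

/-- extension of a class function -/
noncomputable def hat (χ : H → ℂ) (g : G) : ℂ :=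
  if h : ∃ x, x⁻¹ * g * x ∈ H ∧ g ≠ 1 then χ ⟨_, h.choose_spec.1⟩ else χ 1

theorem hat_K (χ : H → ℂ) {g : G} (hg : InK H g) : hat χ g = χ 1 := by
  unfold hat
  rw [dif_neg]
  rintro ⟨x, h1, h2⟩
  exact h2 (hg x h1)

theorem hat_spec (hm : Malnormal H) (χ : H → ℂ) (hχ : ∀ h x, χ (x * h * x⁻¹) = χ h)
    {g x : G} (hx : x⁻¹ * g * x ∈ H) : hat χ g = χ ⟨_, hx⟩ := by
  by_cases hg : g = 1
  · subst hg
    rw [hat_K χ (fun _ _ => rfl)]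
    congr 1
    ext; simp
  have h : ∃ x, x⁻¹ * g * x ∈ H ∧ g ≠ 1 := ⟨x, hx, hg⟩
  unfold hat
  rw [dif_pos h]
  set y := h.choose with hy
  have hyH := h.choose_spec.1
  rw [← hy] at hyH
  have e : y⁻¹ * g * y = (y⁻¹ * x) * (x⁻¹ * g * x) * (y⁻¹ * x)⁻¹ := by group
  have h2 := hm (y⁻¹ * x) (x⁻¹ * g * x) hx (by rw [← e]; exact hyH) (by
        intro h; apply hg
        have := congrArg (fun t => x * t * x⁻¹) h
        simpa [mul_assoc] using this)
  rw [← hχ ⟨_, hx⟩ ⟨_, h2⟩]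
  congr 1
  ext
  simpa using e

theorem hat_H (hm : Malnormal H) (χ : H → ℂ) (hχ : ∀ h x, χ (x * h * x⁻¹) = χ h)
    (h : H) : hat χ (h : G) = χ h := by
  rw [hat_spec hm χ hχ (x := 1) (by simp)]
  congr 1; ext; simp

theorem inK_conj (g t : G) : InK H (t * g * t⁻¹) ↔ InK H g := by
  unfold InK
  constructor
  · intro h x hx
    have := h (t * x) (by convert hx using 1; group)
    simpa using this
  · intro h x hx
    have := h (t⁻¹ * x) (by convert hx using 1; group)
    simpa using this

theorem inK_inv (g : G) : InK H g⁻¹ ↔ InK H g := by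
  unfold InK
  refine forall_congr' fun x => ?_
  have : x⁻¹ * g⁻¹ * x = (x⁻¹ * g * x)⁻¹ := by group
  rw [this, inv_mem_iff, inv_eq_one]

theorem hat_conj (hm : Malnormal H) (χ : H → ℂ) (hχ : ∀ h x, χ (x * h * x⁻¹) = χ h)
    (g t : G) : hat χ (t * g * t⁻¹) = hat χ g := by
  by_cases hg : InK H g
  · rw [hat_K χ hg, hat_K χ ((inK_conj g t).mpr hg)]
  · unfold InK at hg
    push Not at hg
    obtain ⟨x, hx, _⟩ := hg
    have e : (t * x)⁻¹ * (t * g * t⁻¹) * (t * x) = x⁻¹ * g * x := by group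
    rw [hat_spec hm χ hχ hx, hat_spec hm χ hχ (x := t * x) (by rw [e]; exact hx)]
    congr 1; ext; exact e

theorem hat_inv (hm : Malnormal H) (χ : H → ℂ) (hχ : ∀ h x, χ (x * h * x⁻¹) = χ h)
    (hi : ∀ h, χ h⁻¹ = starRingEnd ℂ (χ h))
    (g : G) : hat χ g⁻¹ = starRingEnd ℂ (hat χ g) := by
  by_cases hg : InK H g
  · rw [hat_K χ hg, hat_K χ ((inK_inv g).mpr hg), ← hi, inv_one]
  · unfold InK at hg
    push Not at hg
    obtain ⟨x, hx, _⟩ := hg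
    have e : x⁻¹ * g⁻¹ * x = (x⁻¹ * g * x)⁻¹ := by group
    rw [hat_spec hm χ hχ hx, hat_spec hm χ hχ (x := x) (g := g⁻¹) (by rw [e]; exact H.inv_mem hx), ← hi]
    congr 1; ext; exact e

theorem cardK (hm : Malnormal H) :
    ((Finset.univ.filter (InK H)).card : ℂ) = H.index := by
  have h := frob_sum hm (fun _ => 1) (fun _ _ => rfl)
  simp only [Finset.sum_const, nsmul_eq_mul, mul_one, Finset.card_univ] at h
  have h5 : (Fintype.card G : ℂ) = H.index * Fintype.card H := by
    rw [← Nat.card_eq_fintype_card, ← Nat.card_eq_fintype_card, ← H.index_mul_card]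
    push_cast; rfl
  rw [h5] at h
  linear_combination -h

theorem frob_dichotomy (hm : Malnormal H) {V : Type v} [AddCommGroup V] [Module ℂ V]
    (ρ : Representation ℂ G V) [FiniteDimensional ℂ V] [IsIrreducible ρ] :
    ∑ g with InK H g, ρ.character g = 0 ∨
    ∑ g with InK H g, ρ.character g = (Finset.univ.filter (InK H)).card * ρ.character 1 := by
  set ψ := ρ.character with hψ
  have ψconj : ∀ g x, ψ (x * g * x⁻¹) = ψ g := fun g x => char_conj ρ g x
  have ψinv : ∀ g, ψ g⁻¹ = starRingEnd ℂ (ψ g) := fun g => char_inv_conj ρ g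
  have hG0 : (Nat.card G : ℂ) ≠ 0 := by exact_mod_cast Nat.card_pos.ne'
  have hH0 : (Nat.card H : ℂ) ≠ 0 := by exact_mod_cast Nat.card_pos.ne'
  have : Invertible (Nat.card G : ℂ) := invertibleOfNonzero hG0
  have : Invertible (Nat.card H : ℂ) := invertibleOfNonzero hH0
  have hidx : (Nat.card G : ℂ) = H.index * Nat.card H := by
    rw [← H.index_mul_card]; push_cast; rfl
  obtain ⟨e, he⟩ : ∃ e : ℕ, ∑ g, ψ g = Nat.card G * e :=
    ⟨_, by rw [← card_inv_mul_sum_char_eq_finrank ρ, mul_inv_cancel_left₀ hG0]⟩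
  let ρH : Representation ℂ H V := ρ.comp H.subtype
  have hρH : ∀ h : H, ρH.character h = ψ h := fun h => rfl
  obtain ⟨d, hd⟩ : ∃ d : ℕ, ∑ h : H, ψ h = Nat.card H * d :=
    ⟨_, by rw [← card_inv_mul_sum_char_eq_finrank ρH, mul_inv_cancel_left₀ hH0]; rfl⟩
  have hS := frob_sum hm ψ ψconj
  rw [he, hd] at hS
  by_cases hall : ∀ (W : Type u) [AddCommGroup W] [Module ℂ W] (σ : Representation ℂ H W)
      [FiniteDimensional ℂ W], IsIrreducible σ → ∑ h : H, σ.character h *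
        (ψ (h⁻¹ : H) + if h = 1 then Nat.card H * ((e : ℂ) - d) else 0) = 0
  · left
    have := sum_char_zero _ hall (H → ℂ) (regRep H)
    simp only [regRep_char, ite_mul, zero_mul, Finset.sum_ite_eq', Finset.mem_univ, if_true,
      inv_one, OneMemClass.coe_one, ← Nat.card_eq_fintype_card] at this
    have h2 := (mul_eq_zero.mp this).resolve_left hH0
    have h3 : ∑ g with InK H g, ψ g = H.index * (ψ 1 + Nat.card H * ((e : ℂ) - d)) := by
      rw [hidx] at hS
      linear_combination -hS
    rw [h3, h2, mul_zero]
  · right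
    push Not at hall
    obtain ⟨W, _, _, σ, _, hirr, hne⟩ := hall
    set χ := σ.character with hχdef
    have χconj : ∀ g x, χ (x * g * x⁻¹) = χ g := fun g x => char_conj σ g x
    have χinv : ∀ g, χ g⁻¹ = starRingEnd ℂ (χ g) := fun g => char_inv_conj σ g
    obtain ⟨m, hmm⟩ : ∃ m : ℕ, ∑ h : H, ψ h * χ h⁻¹ = Nat.card H * m :=
      ⟨_, by rw [← card_inv_mul_sum_char_mul_char_eq_finrank σ ρH, mul_inv_cancel_left₀ hH0]; rfl⟩
    obtain ⟨n, hn⟩ : ∃ n : ℕ, χ 1 = n := ⟨_, char_one σ⟩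
    have hχn : ∑ h : H, χ h * χ h⁻¹ = Nat.card H := by
      have := char_orthonormal σ σ
      rw [if_pos ⟨Representation.Equiv.refl _⟩] at this
      field_simp at this
      exact_mod_cast this
    have hψn : ∑ g : G, ψ g * ψ g⁻¹ = Nat.card G := by
      have := char_orthonormal ρ ρ
      rw [if_pos ⟨Representation.Equiv.refl _⟩] at this
      field_simp at this
      exact_mod_cast this
    set X := hat χ with hX
    have X1 : X 1 = n := by rw [hX, hat_K χ (fun _ _ => rfl), hn]
    have XH : ∀ h : H, X (h : G) = χ h := hat_H hm χ χconj
    have XHi : ∀ h : H, X ((h : G)⁻¹) = χ h⁻¹ := fun h => by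
      rw [← XH]; rfl
    have Xconj := hat_conj hm χ χconj
    have Xinv := hat_inv hm χ χconj χinv
    have XK : ∀ g, InK H g → X g = n := fun g hg => by rw [hX, hat_K χ hg, hn]
    have XKi : ∀ g, InK H g → X g⁻¹ = n := fun g hg => XK _ ((inK_inv g).mpr hg)
    have ic : ∀ g x : G, (x * g * x⁻¹)⁻¹ = x * g⁻¹ * x⁻¹ := fun g x => by group
    -- norm of X
    have hXX : ∑ g : G, X g * X g⁻¹ = Nat.card G := by
      rw [frob_sum hm (fun g => X g * X g⁻¹) (fun g x => by
        simp only [ic]; rw [hX, Xconj, Xconj])]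
      have : ∑ g with InK H g, X g * X g⁻¹ = H.index * (n * n) := by
        rw [← cardK hm, ← nsmul_eq_mul, ← Finset.sum_const]
        apply Finset.sum_congr rfl
        intro g hg
        rw [XK g (by simpa using hg), XKi g (by simpa using hg)]
      rw [this]
      simp only [XH, XHi, hχn, inv_one, X1]
      rw [hidx]; ring
    have hXψ : ∑ g : G, ψ g * X g⁻¹ = Nat.card G * (n * ((e : ℂ) - d) + m) := by
      rw [frob_sum hm (fun g => ψ g * X g⁻¹) (fun g x => by
        simp only [ic]; rw [hX, Xconj, ψconj])]
      have : ∑ g with InK H g, ψ g * X g⁻¹ = (∑ g with InK H g, ψ g) * n := by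
        rw [Finset.sum_mul]
        apply Finset.sum_congr rfl
        intro g hg
        rw [XKi g (by simpa using hg)]
      rw [this]
      simp only [XHi, hmm, inv_one, X1]
      rw [hidx] at hS ⊢
      linear_combination -n * hS
    obtain ⟨c, hc⟩ : ∃ c : ℤ, (c : ℂ) = n * ((e : ℂ) - d) + m := ⟨n * (e - d) + m, by push_cast; rfl⟩
    rw [← hc] at hXψ
    have hXψ' : ∑ g : G, X g * ψ g⁻¹ = Nat.card G * c := by
      rw [← hXψ, ← Equiv.sum_comp (Equiv.inv G)]
      apply Finset.sum_congr rfl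
      intro g _
      simp [mul_comm]
    have hc0 : c ≠ 0 := by
      intro h0
      apply hne
      simp only [mul_add, Finset.sum_add_distrib, mul_ite, mul_zero, Finset.sum_ite_eq',
        Finset.mem_univ, if_true, hn]
      have : ∑ h : H, χ h * ψ ((h⁻¹ : H) : G) = Nat.card H * m := by
        rw [← hmm, ← Equiv.sum_comp (Equiv.inv H)]
        apply Finset.sum_congr rfl
        intro g _
        simp [mul_comm]
      rw [this]
      rw [h0] at hc
      push_cast at hc
      linear_combination - (Nat.card H : ℂ) * hc
    have hnorm : ∑ g : G, ((Complex.normSq (X g - c * ψ g) : ℝ) : ℂ) = Nat.card G * (1 - (c : ℂ) ^ 2) := by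
      have : ∀ g : G, ((Complex.normSq (X g - c * ψ g) : ℝ) : ℂ) =
          X g * X g⁻¹ - c * (X g * ψ g⁻¹) - c * (ψ g * X g⁻¹) + c ^ 2 * (ψ g * ψ g⁻¹) := by
        intro g
        rw [← Complex.mul_conj, hX, Xinv, ψinv]
        simp only [map_sub, map_mul, map_intCast]
        ring
      simp only [this, Finset.sum_add_distrib, Finset.sum_sub_distrib, ← Finset.mul_sum]
      rw [hXX, hXψ, hXψ', hψn]
      ring
    have hnormR : ∑ g : G, Complex.normSq (X g - c * ψ g) = Nat.card G * (1 - (c : ℝ) ^ 2) := by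
      exact_mod_cast hnorm
    have hc1 : (1 : ℝ) ≤ (c : ℝ) ^ 2 := by
      have : 1 ≤ c ^ 2 := by
        have := sq_pos_of_ne_zero hc0
        omega
      exact_mod_cast this
    have hle : ∑ g : G, Complex.normSq (X g - c * ψ g) ≤ 0 := by
      rw [hnormR]
      exact mul_nonpos_of_nonneg_of_nonpos (by positivity) (by linarith)
    have hz := (Finset.sum_eq_zero_iff_of_nonneg (fun g _ => Complex.normSq_nonneg _)).mp
      (le_antisymm hle (Finset.sum_nonneg (fun g _ => Complex.normSq_nonneg _)))
    have hXc : ∀ g, X g = c * ψ g := fun g => by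
      have := hz g (Finset.mem_univ _)
      rw [Complex.normSq_eq_zero] at this
      exact sub_eq_zero.mp this
    have hc0' : (c : ℂ) ≠ 0 := by exact_mod_cast hc0
    rw [← nsmul_eq_mul, ← Finset.sum_const]
    apply Finset.sum_congr rfl
    intro g hg
    apply mul_left_cancel₀ hc0'
    rw [← hXc, ← hXc, XK g (by simpa using hg), X1]

theorem frob_Z (hm : Malnormal H) (V : Type v) [AddCommGroup V] [Module ℂ V]
    (ρ : Representation ℂ G V) [FiniteDimensional ℂ V] :
    ∀ v : V, ∑ k with InK H k, ρ k (∑ l with InK H l, ρ l v) =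
      ((Finset.univ.filter (InK H)).card : ℂ) • ∑ l with InK H l, ρ l v := by
  refine rep_ind (fun V _ _ ρ => ∀ v : V, ∑ k with InK H k, ρ k (∑ l with InK H l, ρ l v) =
      ((Finset.univ.filter (InK H)).card : ℂ) • ∑ l with InK H l, ρ l v) ?_ ?_ ?_ V ρ
  · intro V _ _ ρ h v
    exact Subsingleton.elim _ _
  · intro V _ _ ρ _ hirr v
    let Z : V →ₗ[ℂ] V := ∑ k with InK H k, ρ k
    have hZ : ∀ v, ∑ l with InK H l, ρ l v = Z v := fun v => by simp [Z]
    have hcomm : ∀ g v, Z (ρ g v) = ρ g (Z v) := by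
      intro g v
      rw [← hZ, ← hZ, map_sum, Finset.sum_filter, Finset.sum_filter,
        ← Equiv.sum_comp (MulAut.conj g).toEquiv]
      apply Finset.sum_congr rfl
      intro k _
      simp only [MulEquiv.toEquiv_eq_coe, MulEquiv.coe_toEquiv, MulAut.conj_apply, inK_conj]
      split_ifs
      · rw [← Module.End.mul_apply, ← Module.End.mul_apply, ← map_mul, ← map_mul]; simp
      · rfl
    let F : IntertwiningMap ρ ρ := Z.intertwiningMap_of_isIntertwiningMap ρ ρ hcomm
    obtain ⟨c, hc⟩ :=
      (IsIrreducible.algebraMap_intertwiningMap_bijective_of_isAlgClosed (ρ := ρ)).2 F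
    have hZc : ∀ v, Z v = c • v := by
      intro v
      have : F v = Z v := rfl
      rw [← this, ← hc]
      rfl
    have hZc' : Z = c • LinearMap.id := by ext v; simp [hZc]
    have htr : ∑ g with InK H g, ρ.character g = c * ρ.character 1 := by
      have : LinearMap.trace ℂ V Z = ∑ g with InK H g, ρ.character g := by
        simp [Z, character]
      rw [← this, hZc', char_one]; simp
    have h1 : ρ.character 1 ≠ 0 := by
      rw [char_one]
      have : Nontrivial V := by
        by_contra hcon
        rw [not_nontrivial_iff_subsingleton] at hcon
        have h := hirr.toNontrivial
        obtain ⟨A, B, hAB⟩ := h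
        exact hAB (Subrepresentation.toSubmodule_injective (Subsingleton.elim _ _))
      exact_mod_cast Module.finrank_pos.ne'
    have hcc : c = 0 ∨ c = ((Finset.univ.filter (InK H)).card : ℂ) := by
      rcases frob_dichotomy hm ρ with h | h
      · left
        rw [htr] at h
        exact (mul_eq_zero.mp h).resolve_right h1
      · right
        rw [htr] at h
        exact mul_right_cancel₀ h1 h
    rw [hZ, hZ, hZc, hZc]
    rcases hcc with h | h
    · simp [h]
    · rw [← h]
  · intro V _ _ ρ _ A B hAB hA hB v
    obtain ⟨w, rfl⟩ := (Submodule.prodEquivOfIsCompl _ _ hAB).surjective v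
    have h1 := congrArg Subtype.val (hA w.1)
    have h2 := congrArg Subtype.val (hB w.2)
    have cA : ∀ g (a : A.toSubmodule), ((A.toRepresentation g a : A.toSubmodule) : V) = ρ g a := fun _ _ => rfl
    have cB : ∀ g (a : B.toSubmodule), ((B.toRepresentation g a : B.toSubmodule) : V) = ρ g a := fun _ _ => rfl
    simp only [AddSubmonoidClass.coe_finsetSum, cA, cB, SetLike.val_smul] at h1 h2
    simp only [Submodule.coe_prodEquivOfIsCompl', map_add, Finset.sum_add_distrib, smul_add, h1, h2]

theorem frob_mul_mem (hm : Malnormal H) {a b : G} (ha : InK H a) (hb : InK H b) :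
    InK H (a * b) := by
  have h := congrFun (frob_Z hm (G → ℂ) (regRep G) (Pi.single 1 1)) (a * b)
  have hZ : ∀ g, (∑ l with InK H l, regRep G l (Pi.single 1 (1 : ℂ))) g = if InK H g then 1 else 0 := by
    intro g
    rw [Finset.sum_apply]
    simp only [regRep_apply, Pi.single_apply, inv_mul_eq_one]
    simp
  rw [Pi.smul_apply, hZ, Finset.sum_apply] at h
  simp only [regRep_apply, hZ] at h
  by_contra hcon
  rw [if_neg hcon, smul_zero] at h
  rw [← Finset.sum_filter, Finset.sum_const, nsmul_eq_mul, mul_one, Nat.cast_eq_zero,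
    Finset.card_eq_zero] at h
  have : a ∈ (∅ : Finset G) := by
    rw [← h]; simp [ha, hb]
  simp at this

/-- the Frobenius kernel -/
def frobKernel (hm : Malnormal H) : Subgroup G where
  carrier := {g | InK H g}
  mul_mem' := frob_mul_mem hm
  one_mem' := fun _ _ => rfl
  inv_mem' := fun {g} hg => (inK_inv g).mpr hg

end FrobeniusThm

section FrobGroup
open scoped Pointwise

theorem exists_fixed_of_unique {A S : Type*} [Group A] [Finite A] [Nontrivial A] [MulAction A S]
    [Finite S] (h : ∀ a : A, a ≠ 1 → ∃! s : S, a • s = s) : ∃ s : S, ∀ a : A, a • s = s := by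
  classical
  have := Fintype.ofFinite A
  have := Fintype.ofFinite S
  have := Fintype.ofFinite (MulAction.orbitRel.Quotient A S)
  let q : MulAction.orbitRel.Quotient A S → ℕ := fun O => Nat.card O.orbit
  have hB := MulAction.sum_card_fixedBy_eq_card_orbits_mul_card_group A S
  have hm : 1 < Fintype.card A := Fintype.one_lt_card
  have hfix : ∀ a : A, a ≠ 1 → Fintype.card (MulAction.fixedBy S a) = 1 := by
    intro a ha
    obtain ⟨s, hs, hu⟩ := h a ha
    rw [Fintype.card_eq_one_iff]
    exact ⟨⟨s, hs⟩, fun y => Subtype.ext (hu y.1 y.2)⟩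
  have hfix1 : Fintype.card (MulAction.fixedBy S (1 : A)) = Fintype.card S := by
    rw [← Nat.card_eq_fintype_card, MulAction.fixedBy_one_eq_univ, Nat.card_univ,
      Nat.card_eq_fintype_card]
  rw [← Finset.add_sum_erase _ _ (Finset.mem_univ (1 : A)), hfix1,
    Finset.sum_congr rfl (fun a ha => hfix a (Finset.ne_of_mem_erase ha)), Finset.sum_const,
    Finset.card_erase_of_mem (Finset.mem_univ _), Finset.card_univ, smul_eq_mul, mul_one] at hB
  have hS : Fintype.card S = ∑ O, q O := by
    rw [← Nat.card_eq_fintype_card, Nat.card_congr (MulAction.selfEquivSigmaOrbits' A S),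
      Nat.card_sigma]
  have hdvd : ∀ O, q O ∣ Fintype.card A := by
    intro O
    induction O using Quotient.inductionOn' with
    | h s =>
    have := MulAction.card_orbit_mul_card_stabilizer_eq_card_group A s
    refine ⟨Fintype.card (MulAction.stabilizer A s), ?_⟩
    rw [← this, ← Nat.card_eq_fintype_card (α := MulAction.orbit A s)]
    rfl
  have hq0 : ∀ O, 0 < q O := fun O =>
    Nat.pos_of_dvd_of_pos (hdvd O) Fintype.card_pos
  have hqle : ∀ O, q O ≤ Fintype.card A := fun O => Nat.le_of_dvd Fintype.card_pos (hdvd O)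
  have hhalf : ∀ O, q O < Fintype.card A → 2 * q O ≤ Fintype.card A := by
    intro O hO
    obtain ⟨c, hc⟩ := hdvd O
    have : 2 ≤ c := by
      by_contra hcon
      have : c = 0 ∨ c = 1 := by omega
      rcases this with rfl | rfl <;> omega
    rw [hc, mul_comm 2]
    exact Nat.mul_le_mul_left _ this
  set m := Fintype.card A
  let D : MulAction.orbitRel.Quotient A S → ℕ := fun O => m - q O
  have hD : ∑ O, D O = m - 1 := by
    have h1 : ∑ O, (D O + q O) = Fintype.card (MulAction.orbitRel.Quotient A S) * m := by
      rw [Finset.sum_congr rfl (g := fun _ => m) (fun O _ => Nat.sub_add_cancel (hqle O))]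
      simp
    rw [Finset.sum_add_distrib, ← hS] at h1
    have : Fintype.card (Quotient (MulAction.orbitRel A S)) = Fintype.card (MulAction.orbitRel.Quotient A S) :=
      Fintype.card_congr (Equiv.refl _)
    rw [this] at hB
    omega
  have hone : ∃ O, q O = 1 := by
    have hne : ∑ O, D O ≠ 0 := by omega
    obtain ⟨O1, _, h1⟩ := Finset.exists_ne_zero_of_sum_ne_zero hne
    by_contra hcon
    push Not at hcon
    have h1' : q O1 < m := by simp only [D] at h1; omega
    have hq1 := hcon O1
    have hq1' := hq0 O1
    rw [← Finset.add_sum_erase _ _ (Finset.mem_univ O1)] at hD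
    have hne2 : ∑ O ∈ Finset.univ.erase O1, D O ≠ 0 := by
      simp only [D] at hD ⊢; omega
    obtain ⟨O2, hO2, h2⟩ := Finset.exists_ne_zero_of_sum_ne_zero hne2
    have h2' : q O2 < m := by simp only [D] at h2; omega
    have hle := Finset.single_le_sum (f := D) (fun _ _ => Nat.zero_le _) hO2
    have := hhalf O1 h1'
    have := hhalf O2 h2'
    have e1 : D O1 = m - q O1 := rfl
    have e2 : D O2 = m - q O2 := rfl
    omega
  obtain ⟨O, hO⟩ := hone
  induction O using Quotient.inductionOn' with
  | h s =>
  refine ⟨s, fun a => ?_⟩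
  have hO' : Nat.card (MulAction.orbit A s) = 1 := hO
  rw [Nat.card_eq_one_iff_unique] at hO'
  have := hO'.1
  exact congrArg Subtype.val (Subsingleton.elim (⟨a • s, MulAction.mem_orbit _ _⟩ : MulAction.orbit A s)
    ⟨s, MulAction.mem_orbit_self _⟩)

theorem smul_smul_sylow {A N : Type*} [Group A] [Group N] [MulDistribMulAction A N] {p : ℕ}
    (a : A) (n : N) (P : Sylow p N) : a • (n • P) = (a • n) • (a • P) := by
  apply Sylow.ext
  ext x
  rw [Sylow.pointwise_smul_def, Sylow.coe_subgroup_smul, Sylow.coe_subgroup_smul,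
    Sylow.pointwise_smul_def]
  simp only [Subgroup.mem_pointwise_smul_iff_inv_smul_mem]
  rw [← map_inv, ← map_inv]
  simp [MulAut.smul_def, smul_mul', smul_inv']

theorem fpf_injective {A N : Type*} [Group A] [Group N] [MulDistribMulAction A N]
    {a : A} (ha : ∀ n : N, a • n = n → n = 1) : Function.Injective (fun n : N => n⁻¹ * a • n) := by
  intro x y hxy
  simp only at hxy
  have : a • (y * x⁻¹) = y * x⁻¹ := by
    rw [smul_mul', smul_inv']
    have h2 : a • y = y * (x⁻¹ * a • x) := by rw [hxy]; group
    rw [h2]; group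
  have := ha _ this
  exact (mul_inv_eq_one.mp this).symm

theorem fpf_sylow {A N : Type*} [Group A] [Group N] [Finite N] [MulDistribMulAction A N] (p : ℕ)
    [Fact p.Prime] {a : A} (ha : ∀ n : N, a • n = n → n = 1) : ∃! P : Sylow p N, a • P = P := by
  have inj := fpf_injective ha
  have surj := Finite.surjective_of_injective inj
  obtain ⟨P0⟩ : Nonempty (Sylow p N) := inferInstance
  have hex : ∃ P : Sylow p N, a • P = P := by
    obtain ⟨x, hx⟩ := MulAction.exists_smul_eq N P0 (a • P0)
    obtain ⟨n, hn⟩ := surj x⁻¹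
    refine ⟨n • P0, ?_⟩
    rw [smul_smul_sylow, ← hx, smul_smul]
    congr 1
    simp only at hn
    have : a • n = n * x⁻¹ := by rw [← hn]; group
    rw [this]; group
  obtain ⟨P, hP⟩ := hex
  refine ⟨P, hP, fun Q hQ => ?_⟩
  obtain ⟨n, rfl⟩ := MulAction.exists_smul_eq N P Q
  rw [smul_smul_sylow, hP] at hQ
  let L := MulAction.stabilizer N P
  have hL : ∀ l ∈ L, a • l ∈ L := by
    intro l hl
    rw [MulAction.mem_stabilizer_iff] at hl ⊢
    conv_lhs => rw [← hP]
    rw [← smul_smul_sylow, hl, hP]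
  let F : L → L := fun l => ⟨(l : N)⁻¹ * a • (l : N), L.mul_mem (L.inv_mem l.2) (hL l l.2)⟩
  have Finj : Function.Injective F := by
    intro x y hxy
    exact Subtype.ext (inj (congrArg Subtype.val hxy))
  have Fsurj := Finite.surjective_of_injective Finj
  have hy : n⁻¹ * a • n ∈ L := by
    rw [MulAction.mem_stabilizer_iff, mul_smul, hQ, inv_smul_smul]
  obtain ⟨l, hl⟩ := Fsurj ⟨_, hy⟩
  have : (l : N) = n := inj (congrArg Subtype.val hl)
  have hl2 := l.2
  rw [this] at hl2
  exact hl2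

theorem frob_socle {G : Type*} [Group G] [Finite G] {H : Subgroup G} (hm : Malnormal H)
    (hH : IsCoatom H) (hH0 : H ≠ ⊥) : ∀ x ∈ socle G, ∀ y ∈ socle G, x * y = y * x := by
  classical
  have := Fintype.ofFinite G
  let K := frobKernel hm
  have memK : ∀ g, g ∈ K ↔ InK H g := fun g => Iff.rfl
  have hKn : K.Normal := ⟨fun n hn g => (inK_conj n g).mpr hn⟩
  have hKH : ∀ g, g ∈ K → g ∈ H → g = 1 := fun g hg hh => hg 1 (by simpa using hh)
  have hfpf : ∀ h ∈ H, h ≠ 1 → ∀ k ∈ K, h * k * h⁻¹ = k → k = 1 := by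
    intro h hh h1 k hk hc
    apply hKH k hk
    apply hm k h hh _ h1
    have : k * h * k⁻¹ = h := by
      have h2 : h * k = k * h := by rw [mul_inv_eq_iff_eq_mul] at hc; exact hc
      rw [← h2]; group
    rw [this]; exact hh
  have hK1 : K ≠ ⊥ := by
    intro h
    have h1 := cardK hm
    have h2 : Finset.univ.filter (InK H) = {1} := by
      ext g
      rw [Finset.mem_filter, ← memK, h]
      simp
    rw [h2, Finset.card_singleton] at h1
    have h3 : H.index = 1 := by exact_mod_cast h1.symm
    exact hH.1 (Subgroup.index_eq_one.mp h3)
  -- normal subgroups inside K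
  have hall : ∀ L : Subgroup G, L.Normal → L ≤ K → L ≠ ⊥ → L = K := by
    intro L hL hLK hL0
    have hnot : ¬ L ≤ H := by
      intro hle
      apply hL0
      rw [Subgroup.eq_bot_iff_forall]
      exact fun x hx => hKH x (hLK hx) (hle hx)
    have htop : H ⊔ L = ⊤ := by
      apply hH.2
      exact left_lt_sup.mpr hnot
    apply le_antisymm hLK
    intro k hk
    have hk' : k ∈ ((H ⊔ L : Subgroup G) : Set G) := by rw [htop]; trivial
    rw [Subgroup.mul_normal] at hk'
    obtain ⟨h, hh, l, hl, rfl⟩ := hk'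
    have : h = 1 := hKH h (by
      have := K.mul_mem hk (K.inv_mem (hLK hl))
      simpa using this) hh
    rw [this]; simpa using hl
  -- p-group
  obtain ⟨p, hp, hpK⟩ := Nat.exists_prime_and_dvd (n := Nat.card K) (by
    intro h; exact hK1 (Subgroup.card_eq_one.mp h))
  have : Fact p.Prime := ⟨hp⟩
  letI act : MulDistribMulAction H K := MulDistribMulAction.compHom K
    ((MulAut.conjNormal : G →* MulAut K).comp H.subtype)
  have hact : ∀ (h : H) (k : K), ((h • k : K) : G) = h * k * (h : G)⁻¹ := fun h k => rfl
  have : Nontrivial H := (Subgroup.nontrivial_iff_ne_bot H).mpr hH0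
  obtain ⟨P, hP⟩ := exists_fixed_of_unique (A := H) (S := Sylow p K) (fun a ha =>
    fpf_sylow p (fun n hn => Subtype.ext (hfpf a a.2 (fun h => ha (Subtype.ext h)) n n.2 (by
      rw [← hact, hn]))))
  let L : Subgroup G := (P : Subgroup K).map K.subtype
  have hLK : L ≤ K := Subgroup.map_subtype_le _
  have hHL : H ≤ Subgroup.normalizer (L : Set G) := by
    have key : ∀ h ∈ H, ∀ x ∈ L, h * x * h⁻¹ ∈ L := by
      rintro h hh _ ⟨y, hy, rfl⟩
      refine ⟨(⟨h, hh⟩ : H) • y, ?_, hact _ _⟩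
      have h2 : (⟨h, hh⟩ : H) • y ∈ (⟨h, hh⟩ : H) • (P : Subgroup K) :=
        Subgroup.smul_mem_pointwise_smul _ _ _ hy
      rw [← Sylow.pointwise_smul_def, hP] at h2
      exact h2
    intro h hh
    rw [Subgroup.mem_normalizer_iff]
    intro x
    refine ⟨key h hh x, fun hx => ?_⟩
    have := key h⁻¹ (H.inv_mem hh) _ hx
    simpa [mul_assoc] using this
  have hL0 : L ≠ ⊥ := by
    intro h
    rw [Subgroup.map_eq_bot_iff_of_injective _ K.subtype_injective] at h
    exact P.ne_bot_of_dvd_card hpK h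
  have hLn : L.Normal := by
    rw [← Subgroup.normalizer_eq_top_iff]
    apply hH.2
    refine lt_of_le_of_ne hHL ?_
    intro h
    apply hL0
    rw [Subgroup.eq_bot_iff_forall]
    intro x hx
    refine hKH x (hLK hx) ?_
    rw [h]
    exact Subgroup.le_normalizer hx
  have hLK' := hall L hLn hLK hL0
  have hKp : IsPGroup p K := by
    rw [← hLK']
    exact P.isPGroup'.map _
  -- center
  have : Nontrivial K := (Subgroup.nontrivial_iff_ne_bot K).mpr hK1
  have hZ := hKp.center_nontrivial
  let Z : Subgroup G := (Subgroup.center K).map K.subtype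
  have hZK : Z = K := by
    apply hall
    · exact ConjAct.normal_of_characteristic_of_normal
    · exact Subgroup.map_subtype_le _
    · intro h
      rw [Subgroup.map_eq_bot_iff_of_injective _ K.subtype_injective] at h
      exact (Subgroup.nontrivial_iff_ne_bot _).mp hZ h
  have hab : ∀ x ∈ K, ∀ y ∈ K, x * y = y * x := by
    intro x hx y hy
    rw [← hZK] at hx
    obtain ⟨z, hz, rfl⟩ := hx
    have := (Subgroup.mem_center_iff.mp hz) ⟨y, hy⟩
    exact (congrArg Subtype.val this).symm
  have hsoc : socle G ≤ K := by
    unfold socle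
    refine iSup₂_le ?_
    rintro N ⟨hN, hN0, hNmin⟩
    rcases hNmin (N ⊓ K) inferInstance inf_le_left with h | h
    · exfalso
      obtain ⟨⟨n, hn⟩, hn10⟩ := Subgroup.ne_bot_iff_exists_ne_one.mp hN0
      have hn1 : n ≠ 1 := fun h => hn10 (Subtype.ext h)
      obtain ⟨⟨k, hk⟩, hk10⟩ := Subgroup.ne_bot_iff_exists_ne_one.mp hK1
      have hk1 : k ≠ 1 := fun h => hk10 (Subtype.ext h)
      have hnK : ¬ InK H n := by
        intro hK
        have : n ∈ N ⊓ K := ⟨hn, hK⟩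
        rw [h] at this
        exact hn1 this
      unfold InK at hnK
      push Not at hnK
      obtain ⟨x, hx, _⟩ := hnK
      have hx' : x⁻¹ * n * x ∈ N := by
        have := hN.conj_mem n hn x⁻¹
        simpa using this
      have hc := Subgroup.commute_of_normal_of_disjoint N K hN hKn (disjoint_iff.mpr h) _ _ hx' hk
      refine hk1 (hfpf _ hx ?_ k hk ?_)
      · intro h
        apply hn1
        have := congrArg (fun t => x * t * x⁻¹) h
        simpa [mul_assoc] using this
      · rw [hc.eq]; group
    · rw [← h]; exact inf_le_right
  exact fun x hx y hy => hab x (hsoc hx) y (hsoc hy)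

end FrobGroup

section IBIS

theorem mem_listStabilizer {G Ω : Type*} [Group G] [MulAction G Ω] {l : List Ω} {g : G} :
    g ∈ listStabilizer G l ↔ ∀ ω ∈ l, g • ω = ω := by
  simp [listStabilizer, Subgroup.mem_iInf]

theorem irred_append {G Ω : Type*} [Group G] [MulAction G Ω] {l : List Ω} {ω : Ω}
    (hl : IsIrredundantTuple G l) {g : G} (hg : g ∈ listStabilizer G l) (hgω : g • ω ≠ ω) :
    IsIrredundantTuple G (l ++ [ω]) := by
  rintro ⟨i, hi⟩
  simp only [List.length_append, List.length_singleton] at hi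
  by_cases h : i < l.length
  · obtain ⟨x, hx, hx2⟩ := hl ⟨i, h⟩
    refine ⟨x, ?_, ?_⟩
    · simpa [List.take_append_of_le_length h.le] using hx
    · simpa [List.getElem_append_left h] using hx2
  · have : i = l.length := by omega
    subst this
    exact ⟨g, by simpa using hg, by simpa using hgω⟩

theorem exists_extend_s17 {G Ω : Type*} [Group G] [Finite G] [MulAction G Ω] [FaithfulSMul G Ω]
    (l : List Ω) (hl : IsIrredundantTuple G l) :
    ∃ l', IsBaseTuple G (l ++ l') ∧ IsIrredundantTuple G (l ++ l') := by
  induction hn : Nat.card (listStabilizer G l) using Nat.strong_induction_on generalizing l with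
  | _ n ih =>
  by_cases hb : IsBaseTuple G l
  · exact ⟨[], by simpa using hb, by simpa using hl⟩
  · obtain ⟨⟨g, hg⟩, hg1⟩ := Subgroup.ne_bot_iff_exists_ne_one.mp hb
    have hg1' : g ≠ 1 := fun h => hg1 (Subtype.ext h)
    obtain ⟨ω, hω⟩ : ∃ ω : Ω, g • ω ≠ ω := by
      by_contra! hcon
      exact hg1' (FaithfulSMul.eq_of_smul_eq_smul (fun ω : Ω => by rw [hcon, one_smul]))
    have hirr := irred_append hl hg hω
    have hlt : listStabilizer G (l ++ [ω]) < listStabilizer G l := by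
      refine lt_of_le_of_ne ?_ ?_
      · intro x hx
        rw [mem_listStabilizer] at hx ⊢
        exact fun a ha => hx a (by simp [ha])
      · intro h
        rw [← h, mem_listStabilizer] at hg
        exact hω (hg ω (by simp))
    have hcard : Nat.card (listStabilizer G (l ++ [ω])) < n := by
      rw [← hn]
      exact Set.Finite.card_lt_card (Set.toFinite _) hlt
    obtain ⟨l', h1, h2⟩ := ih _ hcard _ hirr rfl
    exact ⟨ω :: l', by simpa using h1, by simpa using h2⟩

end IBIS

/-- A finite primitive group with non-abelian socle and base size 2 is not IBIS. -/
theorem not_isIBIS_of_baseSize_two {G Ω : Type*} [Group G] [Finite G] [MulAction G Ω]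
    [Finite Ω] [FaithfulSMul G Ω] (hprim : IsPrimitiveAction G Ω)
    (hb : baseSize G Ω = 2)
    (hsoc : ¬ ∀ x ∈ socle G, ∀ y ∈ socle G, x * y = y * x) :
    ¬ IsIBIS G Ω := by
  intro hI
  apply hsoc
  have hnil : ∀ l : List Ω, l.length < 2 → ¬ IsBaseTuple G l := by
    intro l hl hbase
    have : baseSize G Ω ≤ l.length := Nat.sInf_le ⟨l, rfl, hbase⟩
    omega
  obtain ⟨l, hl2, hlb⟩ : ∃ l : List Ω, l.length = 2 ∧ IsBaseTuple G l := by
    have hne : {n | ∃ l : List Ω, l.length = n ∧ IsBaseTuple G l}.Nonempty := by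
      by_contra h
      rw [Set.not_nonempty_iff_eq_empty] at h
      unfold baseSize at hb
      rw [h] at hb
      simp at hb
    have := Nat.sInf_mem hne
    change baseSize G Ω ∈ _ at this
    rw [hb] at this
    exact this
  obtain ⟨a, b, rfl⟩ := List.length_eq_two.mp hl2
  have hlb' : ∀ g : G, g • a = a → g • b = b → g = 1 := by
    intro g h1 h2
    have : g ∈ listStabilizer G [a, b] := by rw [mem_listStabilizer]; simp [h1, h2]
    rw [hlb] at this
    exact this
  have hst : ∀ x : Ω, ∃ g : G, g ≠ 1 ∧ g • x = x := by
    intro x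
    by_contra! hcon
    apply hnil [x] (by simp)
    unfold IsBaseTuple
    rw [Subgroup.eq_bot_iff_forall]
    intro g hg
    rw [mem_listStabilizer] at hg
    by_contra h1
    exact hcon g h1 (hg x (by simp))
  have hga : ∃ g : G, g • a ≠ a := by
    by_contra! hcon
    obtain ⟨g, hg1, hg⟩ := hst b
    exact hg1 (hlb' g (hcon g) hg)
  have hgb : ∃ g : G, g • a = a ∧ g • b ≠ b := by
    by_contra! hcon
    obtain ⟨g, hg1, hg⟩ := hst a
    exact hg1 (hlb' g hg (hcon g hg))
  have irr_nil : IsIrredundantTuple G ([] : List Ω) := fun i => i.elim0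
  have irr_two : ∀ x y : Ω, (∃ g : G, g • x ≠ x) → (∃ g : G, g • x = x ∧ g • y ≠ y) →
      IsIrredundantTuple G [x, y] := by
    rintro x y ⟨g, hg⟩ ⟨g', h1, h2⟩
    have := irred_append irr_nil (g := g) (ω := x) (by rw [mem_listStabilizer]; simp) hg
    exact irred_append (l := [x]) this (g := g') (by rw [mem_listStabilizer]; simp [h1]) h2
  have hab := irr_two a b hga hgb
  have hpt := hprim.1
  have hnt : Nontrivial Ω := by
    obtain ⟨g, hg⟩ := hga
    exact ⟨⟨_, _, hg⟩⟩
  have hpp : MulAction.IsPreprimitive G Ω :=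
    { isTrivialBlock_of_isBlock := fun {B} hB => hprim.2 B hB }
  have hco : ∀ x : Ω, IsCoatom (MulAction.stabilizer G x) := fun x =>
    MulAction.IsPreprimitive.isCoatom_stabilizer_of_isPreprimitive G x
  -- stabilizers fix only one point
  have hfix : ∀ x y : Ω, x ≠ y → ∃ g : G, g • x = x ∧ g • y ≠ y := by
    intro x y hxy
    by_contra! hcon
    have hle : MulAction.stabilizer G x ≤ MulAction.stabilizer G y := fun g hg => hcon g hg
    have heq : MulAction.stabilizer G x = MulAction.stabilizer G y := by
      rcases hle.eq_or_lt with h | h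
      · exact h
      · exact absurd ((hco x).2 _ h) (hco y).1
    obtain ⟨t, ht⟩ := MulAction.exists_smul_eq G x y
    have hn : Subgroup.normalizer (MulAction.stabilizer G x : Set G) = ⊤ := by
      apply (hco x).2
      refine lt_of_le_of_ne Subgroup.le_normalizer ?_
      intro h
      have htn : t ∈ Subgroup.normalizer (MulAction.stabilizer G x : Set G) := by
        rw [Subgroup.mem_normalizer_iff]
        intro g
        have : t * g * t⁻¹ ∈ MulAction.stabilizer G x ↔ t * g * t⁻¹ ∈ MulAction.stabilizer G y := by
          rw [heq]
        rw [this, MulAction.mem_stabilizer_iff, MulAction.mem_stabilizer_iff, ← ht]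
        simp [mul_smul]
      rw [← h, MulAction.mem_stabilizer_iff, ht] at htn
      exact hxy htn.symm
    have hN : (MulAction.stabilizer G x).Normal := Subgroup.normalizer_eq_top_iff.mp hn
    obtain ⟨g, hg1, hg⟩ := hst x
    apply hg1
    refine FaithfulSMul.eq_of_smul_eq_smul (α := Ω) (fun ω => ?_)
    obtain ⟨s, rfl⟩ := MulAction.exists_smul_eq G x ω
    have := hN.conj_mem g hg s⁻¹
    rw [MulAction.mem_stabilizer_iff, inv_inv, mul_smul, mul_smul, inv_smul_eq_iff] at this
    rw [this, one_smul]
  have htriv : ∀ x y : Ω, x ≠ y → ∀ g : G, g • x = x → g • y = y → g = 1 := by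
    intro x y hxy g hgx hgy
    by_contra hg1
    have hirr := irr_two x y (by
      obtain ⟨t, ht⟩ := MulAction.exists_smul_eq G x y
      exact ⟨t, by rw [ht]; exact hxy.symm⟩) (hfix x y hxy)
    obtain ⟨l', h1, h2⟩ := exists_extend_s17 _ hirr
    have hlen := hI _ _ hlb hab h1 h2
    simp only [List.length_append, List.length_cons, List.length_nil] at hlen
    have : l' = [] := List.length_eq_zero_iff.mp (by omega)
    subst this
    have : g ∈ listStabilizer G ([x, y] ++ []) := by rw [mem_listStabilizer]; simp [hgx, hgy]
    rw [h1] at this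
    exact hg1 this
  refine frob_socle (H := MulAction.stabilizer G a) ?_ (hco a) ?_
  · intro g x hx hgx hx1
    by_contra hg
    have hne : a ≠ g⁻¹ • a := by
      intro h
      apply hg
      rw [MulAction.mem_stabilizer_iff]
      exact (eq_inv_smul_iff.mp h)
    refine hx1 (htriv a (g⁻¹ • a) hne x hx ?_)
    rw [MulAction.mem_stabilizer_iff, mul_smul, mul_smul] at hgx
    rw [eq_inv_smul_iff]; exact hgx
  · obtain ⟨g, hg1, hg⟩ := hst a
    intro h
    have : g ∈ MulAction.stabilizer G a := hg
    rw [h] at this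
    exact hg1 this
end

section
/- Let f ≥ 2 be a natural number, let q = 2^f, and let L = SL(2, F_q) be the special linear group of degree 2 over the field with q elements (which has trivial centre, so L ≅ PSL₂(q)). Consider the action of the group L × L on the set L given by (a, b)·x = a x b⁻¹. This action is faithful, and L × L is an IBIS group on L, of degree |L| = q(q² − 1) = 2^f(2^{2f} − 1). -/
/-- `SL₂(q)` over the field with `q = 2^f` elements. -/
abbrev SL2 (f : ℕ) : Type _ := Matrix.SpecialLinearGroup (Fin 2) (GaloisField 2 f)

/-- The action of `L × L` on `L` given by `(a, b) • x = a * x * b⁻¹`. -/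
noncomputable instance biMulAction (f : ℕ) : MulAction (SL2 f × SL2 f) (SL2 f) where
  smul p x := p.1 * x * p.2⁻¹
  one_smul x := by
    show 1 * x * (1 : SL2 f)⁻¹ = x
    group
  mul_smul p q x := by
    show (p.1 * q.1) * x * (p.2 * q.2)⁻¹ = p.1 * (q.1 * x * q.2⁻¹) * p.2⁻¹
    group

theorem sl2_ct (F : Type*) [Field F] [CharP F 2]
    (x y z : Matrix.SpecialLinearGroup (Fin 2) F) (hz : z ≠ 1)
    (hx : x * z = z * x) (hy : y * z = z * y) : x * y = y * x := by
  have hz' : z 0 1 ≠ 0 ∨ z 1 0 ≠ 0 ∨ z 0 0 ≠ z 1 1 := by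
    by_contra! h
    obtain ⟨h1, h2, h3⟩ := h
    apply hz
    have hd := z.det_coe
    rw [Matrix.det_fin_two, h1, h3] at hd
    have h4 : z 1 1 = 1 := by
      have h5 : (z 1 1 - 1) ^ 2 = 0 := by
        have : (2 : F) = 0 := CharTwo.two_eq_zero
        linear_combination hd + (1 - z 1 1) * this
      exact sub_eq_zero.mp (pow_eq_zero_iff (two_ne_zero)|>.mp h5)
    ext i j
    fin_cases i <;> fin_cases j <;> simp [h1, h2, h3, h4]
  have key : ∀ u v : Matrix.SpecialLinearGroup (Fin 2) F, u * v = v * u ↔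
      (u 0 1 * v 1 0 = v 0 1 * u 1 0 ∧ (u 0 0 - u 1 1) * v 0 1 = (v 0 0 - v 1 1) * u 0 1 ∧
        (u 0 0 - u 1 1) * v 1 0 = (v 0 0 - v 1 1) * u 1 0) := by
    intro u v
    rw [Matrix.SpecialLinearGroup.ext_iff]
    simp only [Matrix.SpecialLinearGroup.coe_mul, Matrix.mul_apply, Fin.sum_univ_two, Fin.forall_fin_two]
    constructor
    · rintro ⟨⟨h1, h2⟩, h3, h4⟩
      refine ⟨?_, ?_, ?_⟩
      · linear_combination h1
      · linear_combination h2
      · linear_combination -h3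
    · rintro ⟨h1, h2, h3⟩
      refine ⟨⟨?_, ?_⟩, ?_, ?_⟩
      · linear_combination h1
      · linear_combination h2
      · linear_combination -h3
      · linear_combination -h1
  rw [key] at hx hy ⊢
  obtain ⟨a1, a2, a3⟩ := hx
  obtain ⟨b1, b2, b3⟩ := hy
  have h00 : z 0 0 ≠ z 1 1 → z 0 0 - z 1 1 ≠ 0 := sub_ne_zero.mpr
  rcases hz' with h | h | h
  · refine ⟨?_, ?_, ?_⟩ <;> apply mul_left_cancel₀ h <;> grind
  · refine ⟨?_, ?_, ?_⟩ <;> apply mul_left_cancel₀ h <;> grind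
  · refine ⟨?_, ?_, ?_⟩ <;> apply mul_left_cancel₀ (h00 h) <;> grind

theorem mem_lstab {G Ω : Type*} [Group G] [MulAction G Ω] (l : List Ω) (g : G) :
    g ∈ listStabilizer G l ↔ ∀ ω ∈ l, g • ω = ω := by
  simp [listStabilizer, Subgroup.mem_iInf]

theorem smul_iff' (f : ℕ) (p : SL2 f × SL2 f) (x : SL2 f) : p • x = x ↔ p.1 * x = x * p.2 := by
  change p.1 * x * p.2⁻¹ = x ↔ _
  rw [mul_inv_eq_iff_eq_mul]

noncomputable def tU (f : ℕ) : SL2 f := ⟨!![1, 1; 0, 1], by simp⟩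
noncomputable def tL (f : ℕ) : SL2 f := ⟨!![1, 0; 1, 1], by simp⟩

theorem tU_tL (f : ℕ) : tU f * tL f ≠ tL f * tU f := by
  intro h
  have := congrArg (fun z : SL2 f => z 0 0) h
  simp only [Matrix.SpecialLinearGroup.coe_mul, Matrix.mul_apply, Fin.sum_univ_two] at this
  change (1 : GaloisField 2 f) * 1 + 1 * 1 = 1 * 1 + 0 * 0 at this
  simp at this

theorem center_aux (f : ℕ) (z : SL2 f) (h : ∀ g, g * z = z * g) : z = 1 := by
  by_contra hz
  exact tU_tL f (sl2_ct _ _ _ z hz (h _) (h _))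

theorem len_three (f : ℕ) (l : List (SL2 f)) (hb : IsBaseTuple (SL2 f × SL2 f) l)
    (hi : IsIrredundantTuple (SL2 f × SL2 f) l) : l.length = 3 := by
  have hb' : ∀ p : SL2 f × SL2 f, (∀ ω ∈ l, p.1 * ω = ω * p.2) → p.1 = 1 := by
    intro p hp
    have : p ∈ listStabilizer (SL2 f × SL2 f) l := by
      rw [mem_lstab]; intro ω hω; rw [smul_iff']; exact hp ω hω
    rw [hb, Subgroup.mem_bot] at this
    rw [this]; rfl
  have hU : tU f ≠ 1 := by
    intro h; apply tU_tL f; rw [h]; simp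
  match l, hb', hi with
  | [], hb', _ => exact absurd (hb' (tU f, 1) (by simp)) hU
  | [x], hb', _ => exact absurd (hb' (tU f, x⁻¹ * tU f * x) (by simp [mul_assoc])) hU
  | [x, y], hb', _ =>
    exfalso
    by_cases hxy : y = x
    · subst hxy
      exact absurd (hb' (tU f, y⁻¹ * tU f * y) (by simp [mul_assoc])) hU
    · have := hb' (y * x⁻¹, x⁻¹ * y) (by simp [mul_assoc])
      exact hxy (mul_inv_eq_one.mp this)
  | [x, y, z], _, _ => rfl
  | x :: y :: z :: w :: t, _, hi =>
    exfalso
    obtain ⟨⟨p1, p2⟩, hp, hp'⟩ := hi ⟨1, by simp⟩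
    obtain ⟨⟨a, b⟩, ha, ha'⟩ := hi ⟨2, by simp⟩
    obtain ⟨⟨c, d⟩, hc, hc'⟩ := hi ⟨3, by simp⟩
    rw [mem_lstab] at hp ha hc
    simp [smul_iff'] at hp hp' ha ha' hc hc'
    have hxy : y * x⁻¹ ≠ 1 := by
      intro h
      rw [mul_inv_eq_one] at h
      subst h
      exact hp' hp
    have comm : ∀ a b y : SL2 f, a * x = x * b → (a * y = y * b ↔ a * (y * x⁻¹) = (y * x⁻¹) * a) := by
      intro a b y h
      have : b = x⁻¹ * a * x := by rw [mul_assoc, h]; simp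
      subst this
      constructor
      · intro h
        rw [← mul_assoc, h]; simp [mul_assoc]
      · intro h
        have := congrArg (· * x) h
        simpa [mul_assoc] using this
    have hc1 : c ≠ 1 := by
      rintro rfl
      apply hc'
      have : d = 1 := by simpa using hc.1
      simp [this]
    have hac : a * c = c * a :=
      sl2_ct _ a c _ hxy ((comm _ _ _ ha.1).1 ha.2) ((comm _ _ _ hc.1).1 hc.2.1)
    apply ha'
    rw [comm _ _ _ ha.1]
    exact sl2_ct _ _ _ c hc1 hac ((comm _ _ _ hc.1).1 hc.2.2).symm

theorem card_aux (f : ℕ) (hf : 2 ≤ f) : Nat.card (SL2 f) = 2 ^ f * (2 ^ (2 * f) - 1) := by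
  have hF : Nat.card (GaloisField 2 f) = 2 ^ f := GaloisField.card 2 f (by omega)
  haveI : Finite (GaloisField 2 f) := Nat.finite_of_card_ne_zero (by rw [hF]; positivity)
  haveI : Fintype (GaloisField 2 f) := Fintype.ofFinite _
  have hGL := Matrix.card_GL_field (𝔽 := GaloisField 2 f) 2
  rw [← Nat.card_eq_fintype_card, hF, Fin.prod_univ_two] at hGL
  let φ : Matrix.GeneralLinearGroup (Fin 2) (GaloisField 2 f) →* (GaloisField 2 f)ˣ :=
    Matrix.GeneralLinearGroup.det
  have hsurj : Function.Surjective φ := by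
    intro u
    refine ⟨Matrix.GeneralLinearGroup.mkOfDetNeZero !![(u : GaloisField 2 f), 0; 0, 1] (by simp), ?_⟩
    ext
    simp [φ, Matrix.GeneralLinearGroup.mkOfDetNeZero]
  have hU : Nat.card (GaloisField 2 f)ˣ = 2 ^ f - 1 := by
    rw [Nat.card_units, hF]
  have hrange : (Matrix.SpecialLinearGroup.toGL (n := Fin 2) (R := GaloisField 2 f)).range
      = φ.ker := by
    ext g
    rw [MonoidHom.mem_ker, MonoidHom.mem_range]
    constructor
    · rintro ⟨x, rfl⟩
      ext
      simp [φ]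
    · intro h
      refine ⟨⟨g.val, ?_⟩, ?_⟩
      · have := congrArg Units.val h
        simpa [φ] using this
      · ext; rfl
  have hker : Nat.card (SL2 f) = Nat.card φ.ker := by
    rw [← hrange]
    exact Nat.card_congr
      (MonoidHom.ofInjective Matrix.SpecialLinearGroup.toGL_injective).toEquiv
  have hidx := φ.ker.card_mul_index
  rw [Subgroup.index_ker, MonoidHom.range_eq_top.mpr hsurj, Subgroup.card_top, hU, hGL,
    ← hker] at hidx
  have h4 : 1 < 2 ^ f := Nat.one_lt_two_pow (by omega)
  have hpos : 0 < 2 ^ f - 1 := by omega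
  apply Nat.eq_of_mul_eq_mul_right hpos
  rw [hidx, pow_mul', show (2 ^ f) ^ 2 - (2 ^ f) ^ ((1 : Fin 2) : ℕ) = 2 ^ f * (2 ^ f - 1) by
    simp [Nat.mul_sub, sq]]
  simp
  ring

/-- For `f ≥ 2` and `q = 2^f`, `L = SL₂(q) ≅ PSL₂(q)` has trivial centre, the action of
`L × L` on `L` by `(a, b) • x = a x b⁻¹` is faithful, and `L × L` is an IBIS group on `L`
of degree `|L| = q(q² − 1) = 2^f(2^{2f} − 1)`. -/
theorem diagonal_PSL2_isIBIS (f : ℕ) (hf : 2 ≤ f) :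
    (∀ (p : SL2 f × SL2 f) (x : SL2 f), p • x = p.1 * x * p.2⁻¹) ∧
    Subgroup.center (SL2 f) = ⊥ ∧
    FaithfulSMul (SL2 f × SL2 f) (SL2 f) ∧
    IsIBIS (SL2 f × SL2 f) (SL2 f) ∧
    Nat.card (SL2 f) = 2 ^ f * (2 ^ (2 * f) - 1) := by
  refine ⟨fun _ _ => rfl, ?_, ⟨?_⟩, ?_, card_aux f hf⟩
  · rw [eq_bot_iff]
    intro z hz
    rw [Subgroup.mem_bot]
    exact center_aux f z (Subgroup.mem_center_iff.mp hz)
  · intro p q h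
    have h' : ∀ x : SL2 f, (q⁻¹ * p) • x = x := by
      intro x
      rw [mul_smul, h x, inv_smul_smul]
    generalize hr : q⁻¹ * p = r at h'
    have h2 : ∀ x, r.1 * x = x * r.2 := fun x => (smul_iff' f r x).1 (h' x)
    have h3 : r.1 = r.2 := by simpa using h2 1
    have h4 : r.1 = 1 := center_aux f _ (fun g => by rw [h2 g, h3])
    have h5 : r = 1 := Prod.ext h4 (h3 ▸ h4)
    rw [h5] at hr
    exact (inv_mul_eq_one.mp hr).symm
  · intro l₁ l₂ h1 h2 h3 h4
    rw [len_three f l₁ h1 h2, len_three f l₂ h3 h4]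
end
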